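/- arXiv:2109.06943 — 2 statements merged into one kernel-verified Lean document; each statement's English description precedes it below -/
import Mathlib

section
/- Let Ω ⊂ ℝⁿ be a hyperbolic domain (its minimal pseudodistance ρ_Ω is a distance inducing the topology of Ω) and let f : D* → Ω be a conformal harmonic map from the punctured disc D* = {0 < |z| < 1}. If there is a sequence z_k → 0 in D* with f(z_k) → p ∈ Ω, then f extends to a conformal harmonic map D → Ω (Kwack-type extension theorem for minimal discs). -/
open Metric RealInnerProductSpace Filter

/-- The (vector-valued) Laplacian of a map `f : ℂ → ℝⁿ`. -/
noncomputable def lapV (n : ℕ) (f : ℂ → EuclideanSpace ℝ (Fin n)) (z : ℂ) :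
    EuclideanSpace ℝ (Fin n) :=
  fderiv ℝ (fun w => fderiv ℝ f w 1) z 1 +
  fderiv ℝ (fun w => fderiv ℝ f w Complex.I) z Complex.I

/-- A map `f : ℂ → ℝⁿ` is conformal harmonic on a set `s` if it is `C²`, harmonic, and
`|f_x| = |f_y|`, `f_x · f_y = 0` on `s`. -/
def ConformalHarmonicOn (n : ℕ) (f : ℂ → EuclideanSpace ℝ (Fin n)) (s : Set ℂ) : Prop :=
  ContDiffOn ℝ 2 f s ∧ (∀ z ∈ s, lapV n f z = 0) ∧
  ∀ z ∈ s, ‖fderiv ℝ f z 1‖ = ‖fderiv ℝ f z Complex.I‖ ∧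
    ⟪fderiv ℝ f z 1, fderiv ℝ f z Complex.I⟫ = 0

/-- The minimal (Kobayashi-type) pseudometric of a domain `Ω ⊆ ℝⁿ`:
`g_Ω(x, u) = inf {1/r : ∃ conformal harmonic f : D → Ω, f(0) = x, f_x(0) = r u}`. -/
noncomputable def minMetric (n : ℕ) (Ω : Set (EuclideanSpace ℝ (Fin n)))
    (x u : EuclideanSpace ℝ (Fin n)) : ℝ :=
  sInf {t : ℝ | ∃ r : ℝ, 0 < r ∧ t = 1 / r ∧
    ∃ f : ℂ → EuclideanSpace ℝ (Fin n),
      ConformalHarmonicOn n f (ball (0:ℂ) 1) ∧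
      Set.MapsTo f (ball (0:ℂ) 1) Ω ∧ f 0 = x ∧ fderiv ℝ f 0 1 = r • u}

/-- The minimal pseudodistance `ρ_Ω`, obtained by integrating `g_Ω` over paths in `Ω`
joining the two points. -/
noncomputable def minDist (n : ℕ) (Ω : Set (EuclideanSpace ℝ (Fin n)))
    (x y : EuclideanSpace ℝ (Fin n)) : ℝ :=
  sInf {L : ℝ | ∃ γ : ℝ → EuclideanSpace ℝ (Fin n),
    ContDiffOn ℝ 1 γ (Set.Icc 0 1) ∧ (∀ t ∈ Set.Icc (0:ℝ) 1, γ t ∈ Ω) ∧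
    γ 0 = x ∧ γ 1 = y ∧
    L = ∫ t in (0:ℝ)..1, minMetric n Ω (γ t) (derivWithin γ (Set.Icc 0 1) t)}

/-- A domain is hyperbolic if its minimal pseudodistance separates points. -/
def Hyperbolic (n : ℕ) (Ω : Set (EuclideanSpace ℝ (Fin n))) : Prop :=
  ∀ x ∈ Ω, ∀ y ∈ Ω, x ≠ y → 0 < minDist n Ω x y


open InnerProductSpace in
theorem kw_lap (n : ℕ) (f : ℂ → EuclideanSpace ℝ (Fin n)) (z : ℂ) (h : ContDiffAt ℝ 2 f z) :
    lapV n f z = Laplacian.laplacian f z := by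
  have hd : DifferentiableAt ℝ (fderiv ℝ f) z :=
    (h.fderiv_right (m := 1) (by norm_num)).differentiableAt (by norm_num)
  rw [laplacian_eq_iteratedFDeriv_complexPlane]
  simp only [iteratedFDeriv_two_apply, lapV]
  rw [fderiv_clm_apply hd (by fun_prop), fderiv_clm_apply hd (by fun_prop)]
  simp

open InnerProductSpace in
theorem kw_harm (n : ℕ) (f : ℂ → EuclideanSpace ℝ (Fin n)) (s : Set ℂ) (hs : IsOpen s)
    (h : ConformalHarmonicOn n f s) : HarmonicOnNhd f s := by
  intro z hz
  refine ⟨h.1.contDiffAt (hs.mem_nhds hz), ?_⟩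
  filter_upwards [hs.mem_nhds hz] with w hw
  rw [← kw_lap n f w (h.1.contDiffAt (hs.mem_nhds hw)), h.2.1 w hw]
  rfl

open InnerProductSpace in
theorem kw_harm_comp (n : ℕ) (f : ℂ → EuclideanSpace ℝ (Fin n)) (s : Set ℂ)
    (h : HarmonicOnNhd f s) (i : Fin n) : HarmonicOnNhd (fun z => f z i) s := 
  h.comp_CLM (EuclideanSpace.proj i : EuclideanSpace ℝ (Fin n) →L[ℝ] ℝ)

open InnerProductSpace in
theorem kw_harm_of_comp (n : ℕ) (f : ℂ → EuclideanSpace ℝ (Fin n)) (s : Set ℂ)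
    (h : ∀ i, HarmonicOnNhd (fun z => f z i) s) :
    ContDiffOn ℝ 2 f s ∧ ∀ z ∈ s, lapV n f z = 0 := by
  have hc : ∀ z ∈ s, ContDiffAt ℝ 2 f z := fun z hz =>
    contDiffAt_piLp (p := 2) |>.2 fun i => (h i z hz).1
  refine ⟨fun z hz => (hc z hz).contDiffWithinAt, fun z hz => ?_⟩
  rw [kw_lap n f z (hc z hz)]
  ext i
  have := (hc z hz).laplacian_CLM_comp_left
    (l := (EuclideanSpace.proj i : EuclideanSpace ℝ (Fin n) →L[ℝ] ℝ))
  simp only [Function.comp] at this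
  have h2 := (h i z hz).2.self_of_nhds
  have e : (fun z => f z i) =
      (EuclideanSpace.proj i : EuclideanSpace ℝ (Fin n) →L[ℝ] ℝ) ∘ f := rfl
  rw [e, this] at h2
  simpa using h2

open InnerProductSpace in
/-- harmonic composed with holomorphic is harmonic -/
theorem kw_harm_holo (u : ℂ → ℝ) (φ : ℂ → ℂ) (z : ℂ) (hu : HarmonicAt u (φ z))
    (hφ : AnalyticAt ℂ φ z) : HarmonicAt (fun w => u (φ w)) z := by
  obtain ⟨ε, h₁ε, h₂ε⟩ := Metric.isOpen_iff.1 (isOpen_setOfPred_harmonicAt (f := u)) _ hu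
  obtain ⟨F, h₁F, h₂F⟩ := InnerProductSpace.HarmonicOnNhd.exists_analyticOnNhd_ball_re_eq
    (fun _ hy ↦ h₂ε hy)
  have h3 : AnalyticAt ℂ (fun w => F (φ w)) z := 
    (h₁F (φ z) (mem_ball_self h₁ε)).comp hφ
  refine (harmonicAt_congr_nhds ?_).1 h3.harmonicAt_re
  filter_upwards [hφ.continuousAt.preimage_mem_nhds (ball_mem_nhds _ h₁ε)] with w hw
  exact h₂F hw

/-- precomposition of a conformal harmonic map with a holomorphic map -/
theorem kw_conf_holo (n : ℕ) (f : ℂ → EuclideanSpace ℝ (Fin n)) (s t : Set ℂ) (hs : IsOpen s)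
    (h : ConformalHarmonicOn n f s) (φ : ℂ → ℂ) (hφ : Differentiable ℂ φ)
    (hm : Set.MapsTo φ t s) :
    ConformalHarmonicOn n (fun z => f (φ z)) t ∧
      ∀ z ∈ t, ∀ v, fderiv ℝ (fun z => f (φ z)) z v = fderiv ℝ f (φ z) (deriv φ z * v) := by
  have hder : ∀ z ∈ t, ∀ v, fderiv ℝ (fun z => f (φ z)) z v
      = fderiv ℝ f (φ z) (deriv φ z * v) := by
    intro z hz v
    have h1 : DifferentiableAt ℝ f (φ z) :=
      (h.1.contDiffAt (hs.mem_nhds (hm hz))).differentiableAt (by norm_num)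
    have h2 : HasFDerivAt φ ((fderiv ℂ φ z).restrictScalars ℝ) z := 
      (hφ z).hasFDerivAt.restrictScalars ℝ
    have h3 := (h1.hasFDerivAt.comp z h2).fderiv
    change fderiv ℝ (f ∘ φ) z v = _
    rw [h3]
    simp [mul_comm]
  refine ⟨?_, hder⟩
  have hh := kw_harm_of_comp n (fun z => f (φ z)) t (fun i z hz => 
    kw_harm_holo (fun w => f w i) φ z (kw_harm_comp n f s (kw_harm n f s hs h) i _ (hm hz))
      (hφ.analyticAt z))
  refine ⟨hh.1, hh.2, fun z hz => ?_⟩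
  rw [hder z hz, hder z hz]
  obtain ⟨h1, h2⟩ := h.2.2 _ (hm hz)
  set a := (deriv φ z).re
  set b := (deriv φ z).im
  have e1 : deriv φ z * 1 = a • (1:ℂ) + b • Complex.I := by
    simp [a, b, Complex.re_add_im]
  have e2 : deriv φ z * Complex.I = a • Complex.I + (-b) • (1:ℂ) := by
    apply Complex.ext <;> simp [a, b]
  rw [e1, e2]
  simp only [map_add, map_smul]
  set X := fderiv ℝ f (φ z) 1
  set Y := fderiv ℝ f (φ z) Complex.I
  have h3 : ⟪Y, X⟫ = 0 := by rw [real_inner_comm]; exact h2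
  have h4 : ⟪X, X⟫ = ⟪Y, Y⟫ := by rw [real_inner_self_eq_norm_sq, real_inner_self_eq_norm_sq, h1]
  constructor
  · rw [← sq_eq_sq₀ (norm_nonneg _) (norm_nonneg _), ← real_inner_self_eq_norm_sq,
      ← real_inner_self_eq_norm_sq]
    simp only [inner_add_left, inner_add_right, inner_smul_left, inner_smul_right, h2, h3, h4]
    simp
  · simp only [inner_add_left, inner_add_right, inner_smul_left, inner_smul_right, h2, h3, h4]
    simp
    ring

open InnerProductSpace in
theorem kw_loc_max (u : ℂ → ℝ) (z : ℂ) (hu : HarmonicAt u z) (hm : IsLocalMax u z) :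
    ∀ᶠ w in nhds z, u w = u z := by
  obtain ⟨ε, h₁ε, h₂ε⟩ := Metric.isOpen_iff.1 (isOpen_setOfPred_harmonicAt (f := u)) _ hu
  obtain ⟨F, h₁F, h₂F⟩ := InnerProductSpace.HarmonicOnNhd.exists_analyticOnNhd_ball_re_eq
    (fun _ hy ↦ h₂ε hy)
  have hball := ball_mem_nhds z h₁ε
  have h4 := Complex.eventually_eq_of_isLocalMax_norm (f := fun w => Complex.exp (F w)) (c := z)
    (by
      filter_upwards [hball] with w hw
      exact (h₁F w hw).differentiableAt.cexp)
    (by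
      filter_upwards [hball, hm] with w hw hw2
      simp only [Function.comp, Complex.norm_exp, Real.exp_le_exp]
      have a := h₂F hw
      have b := h₂F (mem_ball_self h₁ε)
      simp only at a b
      rw [a, b]; exact hw2)
  filter_upwards [hball, h4] with w hw hw2
  have := congrArg norm hw2
  simp only [Complex.norm_exp, Real.exp_eq_exp] at this
  have a := h₂F hw
  have b := h₂F (mem_ball_self h₁ε)
  simp only at a b
  rw [← a, ← b, this]

open InnerProductSpace in
theorem kw_max (u : ℂ → ℝ) (r₁ r₂ M : ℝ) (hr : 0 < r₁)
    (hu : ∀ z : ℂ, r₁ ≤ ‖z‖ → ‖z‖ ≤ r₂ → HarmonicAt u z)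
    (h1 : ∀ z : ℂ, ‖z‖ = r₁ → u z ≤ M) (h2 : ∀ z : ℂ, ‖z‖ = r₂ → u z ≤ M)
    (z : ℂ) (hz1 : r₁ ≤ ‖z‖) (hz2 : ‖z‖ ≤ r₂) : u z ≤ M := by
  set K : Set ℂ := {z | r₁ ≤ ‖z‖ ∧ ‖z‖ ≤ r₂}
  have hKc : IsClosed K := (isClosed_le continuous_const continuous_norm).inter
    (isClosed_le continuous_norm continuous_const)
  have hK : IsCompact K := (isCompact_closedBall (0:ℂ) r₂).of_isClosed_subset hKc
    (fun w hw => by simpa using hw.2)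
  have hcont : ContinuousOn u K := fun w hw =>
    (hu w hw.1 hw.2).1.continuousAt.continuousWithinAt
  obtain ⟨m, hmK, hm⟩ := hK.exists_isMaxOn ⟨z, hz1, hz2⟩ hcont
  have hK2c : IsClosed (K ∩ u ⁻¹' {u m}) := hcont.preimage_isClosed_of_isClosed hKc isClosed_singleton
  have hK2 : IsCompact (K ∩ u ⁻¹' {u m}) := hK.of_isClosed_subset hK2c Set.inter_subset_left
  obtain ⟨q, hq, hqm⟩ := hK2.exists_isMinOn ⟨m, hmK, rfl⟩ (continuous_norm (E := ℂ)).continuousOn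
  refine le_trans (hm (show z ∈ K from ⟨hz1, hz2⟩)) ?_
  have hqu : u q = u m := hq.2
  rw [← hqu]
  rcases eq_or_lt_of_le hq.1.1 with e | hlt1
  · exact h1 q e.symm
  rcases eq_or_lt_of_le hq.1.2 with e | hlt2
  · exact h2 q e
  exfalso
  have hloc : ∀ᶠ w in nhds q, w ∈ K := by
    filter_upwards [continuous_norm.continuousAt.eventually (lt_mem_nhds hlt1),
      continuous_norm.continuousAt.eventually (gt_mem_nhds hlt2)] with w a b
    exact ⟨a.le, b.le⟩
  have hlm : IsLocalMax u q := by
    filter_upwards [hloc] with w hw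
    rw [hqu]; exact hm hw
  have hev := (kw_loc_max u q (hu q hq.1.1 hq.1.2) hlm).and hloc
  have ht : Tendsto (fun t : ℝ => (t : ℂ) * q) (nhdsWithin 1 (Set.Iio 1)) (nhds q) := by
    have : Tendsto (fun t : ℝ => (t : ℂ) * q) (nhds 1) (nhds (((1:ℝ):ℂ) * q)) :=
      (Continuous.tendsto (by fun_prop) 1)
    simp only [Complex.ofReal_one, one_mul] at this
    exact this.mono_left nhdsWithin_le_nhds
  obtain ⟨t, ⟨ht1, ht2⟩, ht3, ht4⟩ := ((ht.eventually hev).and ((eventually_mem_nhdsWithin).and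
    (eventually_nhdsWithin_of_eventually_nhds (lt_mem_nhds (zero_lt_one' ℝ))))).exists
  have := hqm (show (t:ℂ) * q ∈ K ∩ u ⁻¹' {u m} from ⟨ht2, by simp [ht1, hqu]⟩)
  simp only [Set.mem_ofPred_eq, norm_mul, Complex.norm_real, Real.norm_eq_abs] at this
  rw [abs_of_pos ht4] at this
  have hq0 : 0 < ‖q‖ := hr.trans hlt1
  have : t < 1 := ht3
  nlinarith

open InnerProductSpace in
/-- gradient estimate -/
theorem kw_grad (u : ℂ → ℝ) (z : ℂ) (R δ a : ℝ) (hR : 0 < R) (hδ : 0 < δ)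
    (hu : HarmonicOnNhd u (ball z R)) (hb : ∀ w ∈ ball z R, |u w - a| ≤ δ) :
    ‖((fderiv ℝ u z 1 : ℝ) : ℂ) - Complex.I * (fderiv ℝ u z Complex.I : ℝ)‖
      ≤ δ * Real.exp 2 / (R / 2) := by
  obtain ⟨F, hF, hFu⟩ := InnerProductSpace.HarmonicOnNhd.exists_analyticOnNhd_ball_re_eq hu
  have hz : z ∈ ball z R := mem_ball_self hR
  have hFz := (hF z hz).differentiableAt
  have hfd : ∀ v, fderiv ℝ u z v = (deriv F z * v).re := by
    intro v
    have h1 : HasFDerivAt F ((fderiv ℂ F z).restrictScalars ℝ) z :=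
      hFz.hasFDerivAt.restrictScalars ℝ
    have h2 := Complex.reCLM.hasFDerivAt.comp z h1
    have h3 : u =ᶠ[nhds z] Complex.reCLM ∘ F := by
      filter_upwards [ball_mem_nhds z hR] with w hw
      exact (hFu hw).symm
    rw [h3.fderiv_eq, h2.fderiv]
    simp [mul_comm]
  have hg : ((fderiv ℝ u z 1 : ℝ) : ℂ) - Complex.I * (fderiv ℝ u z Complex.I : ℝ) = deriv F z := by
    rw [hfd, hfd]
    apply Complex.ext <;> simp
  rw [hg]
  set G : ℂ → ℂ := fun w => Complex.exp ((F w - a) / δ)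
  have hsub : closedBall z (R/2) ⊆ ball z R := closedBall_subset_ball (by linarith)
  have hGd : ∀ w ∈ ball z R, HasDerivAt G (G w * (deriv F w / δ)) w := fun w hw =>
    (((hF w hw).differentiableAt.hasDerivAt.sub_const (a:ℂ)).div_const (δ:ℂ)).cexp
  have hnorm : ∀ w ∈ ball z R, ‖G w‖ = Real.exp ((u w - a) / δ) := by
    intro w hw
    have e := hFu hw
    simp only at e
    simp only [G, Complex.norm_exp]
    rw [Complex.div_ofReal_re]
    simp [e]
  have hC := Complex.norm_deriv_le_of_forall_mem_sphere_norm_le (f := G) (c := z) (R := R/2)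
    (C := Real.exp 1) (by linarith)
    (DifferentiableOn.diffContOnCl_ball (U := ball z R)
      (fun w hw => (hGd w hw).differentiableAt.differentiableWithinAt) hsub)
    (fun w hw => by
      have hw' := hsub (sphere_subset_closedBall hw)
      rw [hnorm w hw', Real.exp_le_exp, div_le_one hδ]
      exact (le_abs_self _).trans (hb w hw'))
  rw [(hGd z hz).deriv, norm_mul, hnorm z hz, norm_div, Complex.norm_real, Real.norm_eq_abs,
    abs_of_pos hδ] at hC
  have hlow : Real.exp (-1) ≤ Real.exp ((u z - a) / δ) := by
    rw [Real.exp_le_exp, le_div_iff₀ hδ]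
    have := neg_abs_le (u z - a)
    have := hb z hz
    linarith
  have h5 : Real.exp (-1) * (‖deriv F z‖ / δ) ≤ Real.exp 1 / (R/2) :=
    (mul_le_mul_of_nonneg_right hlow (by positivity)).trans hC
  have h6 : Real.exp 1 * (Real.exp (-1) * (‖deriv F z‖ / δ)) ≤ Real.exp 1 * (Real.exp 1 / (R/2)) :=
    mul_le_mul_of_nonneg_left h5 (Real.exp_pos _).le
  rw [← mul_assoc, ← Real.exp_add, ← mul_div_assoc (Real.exp 1) (Real.exp 1), ← Real.exp_add] at h6
  norm_num at h6
  rw [div_le_iff₀ hδ] at h6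
  calc _ ≤ _ := h6
    _ = _ := by ring

open InnerProductSpace in
/-- removable singularity for harmonic functions -/
theorem kw_remov (u : ℂ → ℝ) (a : ℝ) (hu : HarmonicOnNhd u (ball 0 1 \ {0}))
    (hlim : Tendsto u (nhdsWithin 0 {0}ᶜ) (nhds a)) :
    ∃ v : ℂ → ℝ, HarmonicOnNhd v (ball 0 1) ∧ (∀ z ∈ ball (0:ℂ) 1 \ {0}, v z = u z) ∧ v 0 = a := by
  set g : ℂ → ℂ := fun z => ((fderiv ℝ u z 1 : ℝ) : ℂ) - Complex.I * (fderiv ℝ u z Complex.I : ℝ)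
  have hopen : IsOpen (ball (0:ℂ) 1 \ {0}) := isOpen_ball.sdiff isClosed_singleton
  have hgd : DifferentiableOn ℂ g (ball 0 1 \ {0}) := fun z hz =>
    (HarmonicAt.differentiableAt_complex_partial (hu z hz)).differentiableWithinAt
  have hgo : g =o[nhdsWithin 0 {0}ᶜ] fun z => (z - 0)⁻¹ := by
    rw [Asymptotics.isLittleO_iff]
    intro c hc
    set δ := c / (4 * Real.exp 2)
    have hδ : 0 < δ := by positivity
    have h1 : ∀ᶠ z in nhdsWithin (0:ℂ) {0}ᶜ, |u z - a| ≤ δ := by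
      filter_upwards [hlim (Metric.closedBall_mem_nhds a hδ)] with z hz
      simpa [Real.dist_eq] using hz
    rw [eventually_nhdsWithin_iff, Metric.eventually_nhds_iff_ball] at h1
    obtain ⟨ε, hε, h1⟩ := h1
    have h2 : ∀ᶠ z in nhds (0:ℂ), z ∈ ball (0:ℂ) (min ε 1 / 2) :=
      ball_mem_nhds _ (by positivity)
    filter_upwards [mem_nhdsWithin_of_mem_nhds h2, self_mem_nhdsWithin] with z hz hz0
    have hz0' : z ≠ 0 := hz0
    have hzp : 0 < ‖z‖ := norm_pos_iff.2 hz0'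
    have hz' : ‖z‖ < min ε 1 / 2 := by simpa using hz
    have hin : ∀ w ∈ ball z ‖z‖, w ≠ 0 ∧ ‖w‖ < min ε 1 := by
      intro w hw
      rw [mem_ball, dist_eq_norm] at hw
      refine ⟨?_, ?_⟩
      · rintro rfl
        simp at hw
      · have : ‖w‖ ≤ ‖w - z‖ + ‖z‖ := by simpa using norm_add_le (w - z) z
        linarith
    have h3 := kw_grad u z ‖z‖ δ a hzp hδ
      (fun w hw => hu w ⟨by simpa using (hin w hw).2.trans_le (min_le_right _ _), (hin w hw).1⟩)
      (fun w hw => h1 w (by simpa using (hin w hw).2.trans_le (min_le_left _ _)) (hin w hw).1)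
    refine h3.trans ?_
    rw [sub_zero, norm_inv, ← div_eq_mul_inv, div_div_eq_mul_div]
    apply div_le_div_of_nonneg_right _ hzp.le
    have : δ * Real.exp 2 = c / 4 := by
      simp only [δ]; field_simp
    rw [this]; linarith
  set g₁ := Function.update g 0 0
  have hg1g : ∀ z, z ≠ 0 → g₁ z = g z := fun z hz => Function.update_of_ne hz _ _
  have hd1 := Complex.differentiableOn_update_limUnder_of_isLittleO (f := g₁)
    (ball_mem_nhds (0:ℂ) one_pos)
    (hgd.congr fun z hz => hg1g z hz.2)
    (by
      refine hgo.congr' ?_ EventuallyEq.rfl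
      filter_upwards [self_mem_nhdsWithin] with z hz
      rw [hg1g z hz]; simp [g₁])
  set g₂ := Function.update g₁ 0 (limUnder (nhdsWithin 0 {0}ᶜ) g₁)
  have hg2g : ∀ z, z ≠ 0 → g₂ z = g z := fun z hz => by
    rw [← hg1g z hz]; exact Function.update_of_ne hz _ _
  obtain ⟨G, hG⟩ := hd1.isExactOn_ball
  have hGa : ∀ z ∈ ball (0:ℂ) 1, AnalyticAt ℂ G z := fun z hz =>
    DifferentiableOn.analyticAt (s := ball 0 1)
      (fun w hw => (hG w hw).differentiableAt.differentiableWithinAt) (isOpen_ball.mem_nhds hz)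
  have hGf : ∀ z ∈ ball (0:ℂ) 1, HasFDerivAt (fun w => (G w).re)
      (Complex.reCLM.comp ((ContinuousLinearMap.toSpanSingleton ℂ (g₂ z)).restrictScalars ℝ)) z := by
    intro z hz
    exact Complex.reCLM.hasFDerivAt.comp z ((hG z hz).hasFDerivAt.restrictScalars ℝ)
  have hpre : IsPreconnected (ball (0:ℂ) 1 \ {0}) := by
    have h1 : IsPreconnected (Complex.exp '' {w : ℂ | w.re < 0}) :=
      (convex_halfSpace_re_lt 0).isPreconnected.image _ Complex.continuous_exp.continuousOn
    convert h1 using 1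
    ext z
    simp only [Set.mem_sdiff, mem_ball_zero_iff, Set.mem_singleton_iff, Set.mem_image,
      Set.mem_ofPred_eq]
    constructor
    · rintro ⟨h, h0⟩
      refine ⟨Complex.log z, ?_, Complex.exp_log h0⟩
      rw [Complex.log_re]
      exact Real.log_neg (norm_pos_iff.2 h0) h
    · rintro ⟨w, hw, rfl⟩
      refine ⟨?_, Complex.exp_ne_zero w⟩
      rw [Complex.norm_exp]
      exact (Real.exp_lt_exp.2 hw).trans_eq Real.exp_zero
  have hdiff : DifferentiableOn ℝ (fun z => u z - (G z).re) (ball (0:ℂ) 1 \ {0}) := fun z hz =>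
    (((hu z hz).1.differentiableAt (by norm_num)).sub
      (hGf z hz.1).differentiableAt).differentiableWithinAt
  have hzero : Set.EqOn (fderiv ℝ (fun z => u z - (G z).re)) 0 (ball (0:ℂ) 1 \ {0}) := by
    intro z hz
    rw [fderiv_fun_sub ((hu z hz).1.differentiableAt (by norm_num)) (hGf z hz.1).differentiableAt,
      (hGf z hz.1).fderiv]
    ext v
    have hv : v = v.re • (1:ℂ) + v.im • Complex.I := by
      simp [Complex.re_add_im]
    rw [hg2g z hz.2]
    simp only [sub_apply]
    conv_lhs => enter [1]; rw [hv, map_add, map_smul, map_smul]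
    simp [g]
  obtain ⟨c, hc⟩ := hopen.exists_is_const_of_fderiv_eq_zero hpre hdiff hzero
  refine ⟨fun z => (G z).re + c, fun z hz => ?_, fun z hz => ?_, ?_⟩
  · exact (hGa z hz).harmonicAt_re.add (harmonicAt_const c)
  · have := hc z hz
    linarith
  · have h1 : Tendsto (fun z => (G z).re + c) (nhdsWithin 0 {0}ᶜ) (nhds ((G 0).re + c)) := by
      have : ContinuousAt (fun z => (G z).re + c) 0 :=
        (hGf 0 (by simp)).continuousAt.add continuousAt_const
      exact this.tendsto.mono_left nhdsWithin_le_nhds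
    refine tendsto_nhds_unique (h1.congr' ?_) hlim
    filter_upwards [self_mem_nhdsWithin, mem_nhdsWithin_of_mem_nhds (ball_mem_nhds (0:ℂ) one_pos)]
      with z h1 h2
    have := hc z ⟨h2, h1⟩
    linarith

/-- `x` is the centre of a conformal harmonic disc in `Ω` with derivative `r u` -/
def KDisc (n : ℕ) (Ω : Set (EuclideanSpace ℝ (Fin n)))
    (x u : EuclideanSpace ℝ (Fin n)) (r : ℝ) : Prop :=
  ∃ f : ℂ → EuclideanSpace ℝ (Fin n),
      ConformalHarmonicOn n f (ball (0:ℂ) 1) ∧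
      Set.MapsTo f (ball (0:ℂ) 1) Ω ∧ f 0 = x ∧ fderiv ℝ f 0 1 = r • u

/-- `x` and `y` are joined by a path of minimal speed at most `1/r` -/
def KPath (n : ℕ) (Ω : Set (EuclideanSpace ℝ (Fin n)))
    (x y : EuclideanSpace ℝ (Fin n)) (r : ℝ) : Prop :=
  ∃ γ : ℝ → EuclideanSpace ℝ (Fin n), ContDiff ℝ 1 γ ∧ (∀ t ≤ 0, γ t = x) ∧
    (∀ t, 1 ≤ t → γ t = y) ∧ ∀ t, KDisc n Ω (γ t) (deriv γ t) r

theorem KDisc.mem {n : ℕ} {Ω : Set (EuclideanSpace ℝ (Fin n))}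
    {x u : EuclideanSpace ℝ (Fin n)} {r : ℝ} (h : KDisc n Ω x u r) : x ∈ Ω := by
  obtain ⟨f, _, hm, h0, _⟩ := h
  rw [← h0]; exact hm (by simp)

theorem kw_metric_nonneg (n : ℕ) (Ω : Set (EuclideanSpace ℝ (Fin n)))
    (x u : EuclideanSpace ℝ (Fin n)) : 0 ≤ minMetric n Ω x u := by
  apply Real.sInf_nonneg
  rintro t ⟨r, hr, rfl, _⟩
  positivity

theorem kw_metric_le (n : ℕ) (Ω : Set (EuclideanSpace ℝ (Fin n)))
    (x u : EuclideanSpace ℝ (Fin n)) (r : ℝ) (hr : 0 < r) (h : KDisc n Ω x u r) :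
    minMetric n Ω x u ≤ 1 / r := by
  apply csInf_le
  · refine ⟨0, ?_⟩
    rintro t ⟨r, hr, rfl, _⟩
    positivity
  · exact ⟨r, hr, rfl, h⟩

theorem kw_dist_le (n : ℕ) (Ω : Set (EuclideanSpace ℝ (Fin n)))
    (x y : EuclideanSpace ℝ (Fin n)) (r : ℝ) (hr : 0 < r) (h : KPath n Ω x y r) :
    minDist n Ω x y ≤ 1 / r := by
  obtain ⟨γ, hγ, h0, h1, hd⟩ := h
  have hmem : (∫ t in (0:ℝ)..1, minMetric n Ω (γ t) (derivWithin γ (Set.Icc 0 1) t)) ∈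
      {L : ℝ | ∃ γ : ℝ → EuclideanSpace ℝ (Fin n),
    ContDiffOn ℝ 1 γ (Set.Icc 0 1) ∧ (∀ t ∈ Set.Icc (0:ℝ) 1, γ t ∈ Ω) ∧
    γ 0 = x ∧ γ 1 = y ∧
    L = ∫ t in (0:ℝ)..1, minMetric n Ω (γ t) (derivWithin γ (Set.Icc 0 1) t)} :=
    ⟨γ, hγ.contDiffOn, fun t _ => (hd t).mem, h0 0 le_rfl, h1 1 le_rfl, rfl⟩
  refine (csInf_le ?_ hmem).trans ?_
  · refine ⟨0, ?_⟩
    rintro L ⟨γ, _, _, _, _, rfl⟩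
    exact intervalIntegral.integral_nonneg zero_le_one fun t _ => kw_metric_nonneg _ _ _ _
  · have := intervalIntegral.norm_integral_le_of_norm_le_const (a := (0:ℝ)) (b := 1) (C := 1 / r)
      (f := fun t => minMetric n Ω (γ t) (derivWithin γ (Set.Icc 0 1) t)) (by
        intro t ht
        rw [Set.uIoc_of_le zero_le_one] at ht
        have htI : t ∈ Set.Icc (0:ℝ) 1 := ⟨ht.1.le, ht.2⟩
        rw [Real.norm_eq_abs, abs_of_nonneg (kw_metric_nonneg _ _ _ _),
          ((hγ.differentiable (by norm_num)) t).derivWithin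
            (uniqueDiffOn_Icc zero_lt_one t htI)]
        exact kw_metric_le _ _ _ _ _ hr (hd t))
    have h2 := (le_abs_self _).trans this
    simpa using h2

theorem kw_deriv_left {E : Type*} [NormedAddCommGroup E] [NormedSpace ℝ E] (γ : ℝ → E) (x : E)
    (a : ℝ)
    (hγ : Differentiable ℝ γ) (h : ∀ t ≤ a, γ t = x) (t : ℝ) (ht : t ≤ a) : deriv γ t = 0 := by
  rw [← (hγ t).derivWithin (uniqueDiffOn_Iic a t ht),
    derivWithin_congr (f := fun _ => x) (s := Set.Iic a) (fun s hs => h s hs) (h t ht)]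
  simp

theorem kw_deriv_right {E : Type*} [NormedAddCommGroup E] [NormedSpace ℝ E] (γ : ℝ → E) (x : E)
    (a : ℝ)
    (hγ : Differentiable ℝ γ) (h : ∀ t, a ≤ t → γ t = x) (t : ℝ) (ht : a ≤ t) : deriv γ t = 0 := by
  rw [← (hγ t).derivWithin (uniqueDiffOn_Ici a t ht),
    derivWithin_congr (f := fun _ => x) (s := Set.Ici a) (fun s hs => h s hs) (h t ht)]
  simp

theorem KDisc.two {n : ℕ} {Ω : Set (EuclideanSpace ℝ (Fin n))}
    {x u : EuclideanSpace ℝ (Fin n)} {r : ℝ} (h : KDisc n Ω x u (2 * r)) :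
    KDisc n Ω x ((2:ℝ) • u) r := by
  obtain ⟨f, h1, hm, h0, h2⟩ := h
  exact ⟨f, h1, hm, h0, by rw [h2, smul_smul, mul_comm]⟩

theorem kw_trans (n : ℕ) (Ω : Set (EuclideanSpace ℝ (Fin n)))
    (x y z : EuclideanSpace ℝ (Fin n)) (r : ℝ) (h1 : KPath n Ω x y (2 * r))
    (h2 : KPath n Ω y z (2 * r)) : KPath n Ω x z r := by
  obtain ⟨γ, hγ, hγ0, hγ1, hγd⟩ := h1
  obtain ⟨η, hη, hη0, hη1, hηd⟩ := h2
  have dγ : Differentiable ℝ γ := hγ.differentiable (by norm_num)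
  have dη : Differentiable ℝ η := hη.differentiable (by norm_num)
  have hder : ∀ t, deriv (fun t => γ (2 * t) + η (2 * t - 1) - y) t =
      (2:ℝ) • deriv γ (2 * t) + (2:ℝ) • deriv η (2 * t - 1) := by
    intro t
    have a1 : HasDerivAt (fun t : ℝ => 2 * t) 2 t := by
      simpa using (hasDerivAt_id t).const_mul 2
    have b1 := (dγ (2 * t)).hasDerivAt.scomp t a1
    have b2 := (dη (2 * t - 1)).hasDerivAt.scomp t (a1.sub_const 1)
    exact ((b1.add b2).sub_const y).deriv
  refine ⟨fun t => γ (2 * t) + η (2 * t - 1) - y, by fun_prop, ?_, ?_, ?_⟩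
  · intro t ht
    simp only
    rw [hγ0 _ (by linarith), hη0 _ (by linarith)]; simp
  · intro t ht
    simp only
    rw [hγ1 _ (by linarith), hη1 _ (by linarith)]; simp
  · intro t
    rw [hder]
    simp only
    rcases le_total t (1/2) with ht | ht
    · rw [kw_deriv_left η y 0 dη hη0 _ (by linarith), hη0 _ (by linarith)]
      simpa using (hγd (2 * t)).two
    · rw [kw_deriv_right γ y 1 dγ hγ1 _ (by linarith), hγ1 _ (by linarith)]
      simpa using (hηd (2 * t - 1)).two

theorem kw_smooth_bound : ∃ M : ℝ, 0 < M ∧ ∀ t, |deriv Real.smoothTransition t| ≤ M := by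
  have hc : ContDiff ℝ 1 Real.smoothTransition := Real.smoothTransition.contDiff
  have hd : Differentiable ℝ Real.smoothTransition := hc.differentiable (by norm_num)
  obtain ⟨C, hC⟩ := (isCompact_Icc (a := (0:ℝ)) (b := 1)).exists_bound_of_continuousOn
    (hc.continuous_deriv (by norm_num)).continuousOn
  refine ⟨|C| + 1, by positivity, fun t => ?_⟩
  rcases le_total t 0 with h | h
  · rw [kw_deriv_left _ 0 0 hd (fun s hs => Real.smoothTransition.zero_of_nonpos hs) t h]
    simp; positivity
  rcases le_total 1 t with h' | h'
  · rw [kw_deriv_right _ 1 1 hd (fun s hs => Real.smoothTransition.one_of_one_le hs) t h']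
    simp; positivity
  · have := hC t ⟨h, h'⟩
    rw [Real.norm_eq_abs] at this
    have := le_abs_self C
    linarith

theorem kw_orth (n : ℕ) (hn : 3 ≤ n) (v : EuclideanSpace ℝ (Fin n)) :
    ∃ w : EuclideanSpace ℝ (Fin n), ‖v‖ = ‖w‖ ∧ ⟪v, w⟫ = 0 := by
  have h1 : (Submodule.span ℝ {v})ᗮ ≠ ⊥ := by
    intro h
    rw [Submodule.orthogonal_eq_bot_iff] at h
    have h2 := finrank_span_le_card (R := ℝ) ({v} : Set (EuclideanSpace ℝ (Fin n)))
    rw [h, finrank_top] at h2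
    simp at h2
    omega
  obtain ⟨w, hw, hw0⟩ := Submodule.exists_mem_ne_zero_of_ne_bot h1
  have hvw : ⟪v, w⟫ = 0 := Submodule.mem_orthogonal_singleton_iff_inner_right.1 hw
  have hwp : ‖w‖ ≠ 0 := norm_ne_zero_iff.2 hw0
  refine ⟨(‖v‖ / ‖w‖) • w, ?_, ?_⟩
  · rw [norm_smul, norm_div, norm_norm, norm_norm, div_mul_cancel₀ _ hwp]
  · rw [inner_smul_right, hvw, mul_zero]

theorem kw_disc_lin (n : ℕ) (hn : 3 ≤ n) (Ω : Set (EuclideanSpace ℝ (Fin n)))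
    (x v : EuclideanSpace ℝ (Fin n)) (r ε : ℝ) (hε : 0 < ε) (hr : 0 < r) (hb : ball x ε ⊆ Ω)
    (hv : r * ‖v‖ ≤ ε) : KDisc n Ω x v r := by
  obtain ⟨w, hw, hvw⟩ := kw_orth n hn (r • v)
  set A : ℂ →L[ℝ] EuclideanSpace ℝ (Fin n) :=
    Complex.reCLM.smulRight (r • v) + Complex.imCLM.smulRight w with hA
  have hfd : ∀ z, fderiv ℝ (fun z => x + A z) z = A := by
    intro z
    rw [fderiv_const_add, A.fderiv]
  have hA1 : A 1 = r • v := by simp [hA]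
  have hAI : A Complex.I = w := by simp [hA]
  refine ⟨fun z => x + A z, ⟨?_, ?_, ?_⟩, ?_, by simp, by rw [hfd, hA1]⟩
  · exact (contDiff_const.add A.contDiff).contDiffOn
  · intro z _
    simp [lapV, hfd]
  · intro z _
    rw [hfd, hA1, hAI]
    exact ⟨hw, hvw⟩
  · intro z hz
    apply hb
    rw [mem_ball, dist_eq_norm, add_sub_cancel_left]
    have hz1 : ‖z‖ < 1 := by simpa using hz
    have e : ‖A z‖ = ‖r • v‖ * ‖z‖ := by
      rw [← sq_eq_sq₀ (norm_nonneg _) (by positivity)]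
      have : A z = z.re • (r • v) + z.im • w := by simp [hA]
      have hwv : ⟪w, r • v⟫ = 0 := by rw [real_inner_comm]; exact hvw
      rw [this, ← real_inner_self_eq_norm_sq, mul_pow, Complex.sq_norm, Complex.normSq_apply]
      simp only [inner_add_left, inner_add_right,
        real_inner_smul_left _ _ z.re, real_inner_smul_left _ _ z.im,
        real_inner_smul_right _ _ z.re, real_inner_smul_right _ _ z.im, hvw, hwv]
      rw [real_inner_self_eq_norm_sq, real_inner_self_eq_norm_sq, ← hw]
      ring
    rw [e, norm_smul, Real.norm_eq_abs, abs_of_pos hr]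
    calc r * ‖v‖ * ‖z‖ ≤ ε * ‖z‖ := by gcongr
      _ < ε * 1 := by gcongr
      _ = ε := mul_one _

theorem kw_seg (n : ℕ) (hn : 3 ≤ n) (Ω : Set (EuclideanSpace ℝ (Fin n)))
    (p x y : EuclideanSpace ℝ (Fin n)) (r ε M : ℝ) (hε : 0 < ε) (hr : 0 < r)
    (hM : ∀ t, |deriv Real.smoothTransition t| ≤ M)
    (hb : closedBall p (2 * ε) ⊆ Ω) (hx : x ∈ closedBall p ε) (hy : y ∈ closedBall p ε)
    (hv : r * M * ‖y - x‖ ≤ ε) : KPath n Ω x y r := by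
  have hc : ContDiff ℝ 1 Real.smoothTransition := Real.smoothTransition.contDiff
  have hd : Differentiable ℝ Real.smoothTransition := hc.differentiable (by norm_num)
  refine ⟨fun t => x + Real.smoothTransition t • (y - x), by fun_prop, ?_, ?_, ?_⟩
  · intro t ht
    simp [Real.smoothTransition.zero_of_nonpos ht]
  · intro t ht
    simp [Real.smoothTransition.one_of_one_le ht]
  · intro t
    have hder : deriv (fun t => x + Real.smoothTransition t • (y - x)) t =
        deriv Real.smoothTransition t • (y - x) :=
      (((hd t).hasDerivAt.smul_const (y - x)).const_add x).deriv
    rw [hder]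
    have hmem : x + Real.smoothTransition t • (y - x) ∈ closedBall p ε :=
      (convex_closedBall p ε).add_smul_sub_mem hx hy
        ⟨Real.smoothTransition.nonneg t, Real.smoothTransition.le_one t⟩
    refine kw_disc_lin n hn Ω _ _ r ε hε hr ?_ ?_
    · intro q hq
      apply hb
      rw [mem_closedBall] at hmem ⊢
      rw [mem_ball] at hq
      linarith [dist_triangle q (x + Real.smoothTransition t • (y - x)) p]
    · rw [norm_smul, Real.norm_eq_abs]
      refine le_trans ?_ hv
      rw [mul_assoc]
      gcongr
      exact hM t

theorem kw_arc (n : ℕ) (Ω : Set (EuclideanSpace ℝ (Fin n)))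
    (f : ℂ → EuclideanSpace ℝ (Fin n))
    (hf : ConformalHarmonicOn n f (ball (0:ℂ) 1 \ {0}))
    (hfΩ : Set.MapsTo f (ball (0:ℂ) 1 \ {0}) Ω) (ζ : ℂ) (hζ : ζ ∈ ball (0:ℂ) 1 \ {0})
    (θ r M : ℝ) (hr : 0 < r)
    (hM : ∀ t, |deriv Real.smoothTransition t| ≤ M)
    (hv : r * |θ| * M ≤ -Real.log ‖ζ‖) :
    KPath n Ω (f ζ) (f (ζ * Complex.exp (θ * Complex.I))) r := by
  have hopen : IsOpen (ball (0:ℂ) 1 \ {0}) := isOpen_ball.sdiff isClosed_singleton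
  have hc : ContDiff ℝ 1 Real.smoothTransition := Real.smoothTransition.contDiff
  have hd : Differentiable ℝ Real.smoothTransition := hc.differentiable (by norm_num)
  have hζ0 : ζ ≠ 0 := hζ.2
  have hζp : 0 < ‖ζ‖ := norm_pos_iff.2 hζ0
  have hζ1 : ‖ζ‖ < 1 := by simpa using hζ.1
  have hL : Real.log ‖ζ‖ < 0 := Real.log_neg hζp hζ1
  set c : ℝ → ℂ := fun t => ζ * Complex.exp ((θ * Real.smoothTransition t : ℝ) * Complex.I)
  have hcn : ∀ t, ‖c t‖ = ‖ζ‖ := by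
    intro t
    simp only [c, norm_mul, Complex.norm_exp_ofReal_mul_I, mul_one]
  have hcm : ∀ t, c t ∈ ball (0:ℂ) 1 \ {0} := by
    intro t
    refine ⟨by rw [mem_ball_zero_iff, hcn]; exact hζ1, ?_⟩
    intro h
    have := hcn t
    rw [Set.mem_singleton_iff.1 h, norm_zero] at this
    linarith
  have hcc : ContDiff ℝ 1 c := by
    have h1 : ContDiff ℝ 1 (fun t : ℝ => ((θ * Real.smoothTransition t : ℝ) : ℂ)) :=
      Complex.ofRealCLM.contDiff.comp (contDiff_const.mul hc)
    exact contDiff_const.mul (h1.mul contDiff_const).cexp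
  have hcd : ∀ t, HasDerivAt c (c t * ((θ * deriv Real.smoothTransition t : ℝ) * Complex.I)) t := by
    intro t
    have h1 := ((((hd t).hasDerivAt.const_mul θ).ofReal_comp.mul_const Complex.I).cexp).const_mul ζ
    refine h1.congr_deriv ?_
    simp only [c]
    push_cast
    ring
  refine ⟨fun t => f (c t), ?_, ?_, ?_, ?_⟩
  · rw [contDiff_iff_contDiffAt]
    intro t
    have h1 : ContDiffAt ℝ 1 f (c t) :=
      (hf.1.contDiffAt (hopen.mem_nhds (hcm t))).of_le (by norm_num)
    exact h1.comp t hcc.contDiffAt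
  · intro t ht
    simp [c, Real.smoothTransition.zero_of_nonpos ht]
  · intro t ht
    simp [c, Real.smoothTransition.one_of_one_le ht]
  · intro t
    have hfd : DifferentiableAt ℝ f (c t) :=
      (hf.1.contDiffAt (hopen.mem_nhds (hcm t))).differentiableAt (by norm_num)
    have hder : deriv (fun t => f (c t)) t =
        fderiv ℝ f (c t) (c t * ((θ * deriv Real.smoothTransition t : ℝ) * Complex.I)) :=
      (hfd.hasFDerivAt.comp_hasDerivAt t (hcd t)).deriv
    rw [hder]
    set b : ℂ := r * ((θ * deriv Real.smoothTransition t : ℝ) * Complex.I) with hb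
    have hbn : ‖b‖ ≤ -Real.log ‖ζ‖ := by
      refine le_trans ?_ hv
      rw [hb]
      simp only [norm_mul, Complex.norm_real, Complex.norm_I, mul_one, Real.norm_eq_abs,
        abs_of_pos hr]
      rw [mul_assoc]
      gcongr
      exact hM t
    have hφd : Differentiable ℂ (fun z => c t * Complex.exp (b * z)) := by fun_prop
    have hm : Set.MapsTo (fun z => c t * Complex.exp (b * z)) (ball 0 1) (ball (0:ℂ) 1 \ {0}) := by
      intro z hz
      have hz1 : ‖z‖ < 1 := by simpa using hz
      refine ⟨?_, mul_ne_zero (hcm t).2 (Complex.exp_ne_zero _)⟩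
      rw [mem_ball_zero_iff, norm_mul, hcn, Complex.norm_exp]
      have h1 : (b * z).re < -Real.log ‖ζ‖ := by
        refine (Complex.re_le_norm _).trans_lt ?_
        rw [norm_mul]
        calc ‖b‖ * ‖z‖ ≤ -Real.log ‖ζ‖ * ‖z‖ := by gcongr
          _ < -Real.log ‖ζ‖ * 1 := by gcongr; linarith
          _ = _ := mul_one _
      calc ‖ζ‖ * Real.exp (b * z).re < ‖ζ‖ * Real.exp (-Real.log ‖ζ‖) := by gcongr
        _ = 1 := by rw [Real.exp_neg, Real.exp_log hζp]; field_simp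
    obtain ⟨h1, h2⟩ := kw_conf_holo n f _ (ball 0 1) hopen hf _ hφd hm
    refine ⟨_, h1, hfΩ.comp hm, by simp, ?_⟩
    rw [h2 0 (by simp)]
    have hd0 : deriv (fun z => c t * Complex.exp (b * z)) 0 = c t * b := by
      have : HasDerivAt (fun z => c t * Complex.exp (b * z)) (c t * (Complex.exp (b * 0) * (b * 1))) 0 :=
        (((hasDerivAt_id (0:ℂ)).const_mul b).cexp).const_mul (c t)
      rw [this.deriv]; simp
    rw [hd0, ← map_smul]
    simp only [mul_zero, Complex.exp_zero, mul_one]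
    congr 1
    rw [hb, Complex.real_smul]; ring

theorem kw_circle (n : ℕ) (hn : 3 ≤ n) (Ω : Set (EuclideanSpace ℝ (Fin n)))
    (hΩ : IsOpen Ω) (hhyp : Hyperbolic n Ω)
    (f : ℂ → EuclideanSpace ℝ (Fin n))
    (hf : ConformalHarmonicOn n f (ball (0:ℂ) 1 \ {0}))
    (hfΩ : Set.MapsTo f (ball (0:ℂ) 1 \ {0}) Ω)
    (zk : ℕ → ℂ) (hzk : ∀ k, zk k ∈ ball (0:ℂ) 1 \ {0})
    (hzk0 : Tendsto zk atTop (nhds 0))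
    (p : EuclideanSpace ℝ (Fin n)) (hp : p ∈ Ω)
    (hfp : Tendsto (fun k => f (zk k)) atTop (nhds p)) (ε₀ : ℝ) (hε₀ : 0 < ε₀) :
    ∀ᶠ k in atTop, ∀ w : ℂ, ‖w‖ = ‖zk k‖ → dist (f w) p < ε₀ := by
  have hopen : IsOpen (ball (0:ℂ) 1 \ {0}) := isOpen_ball.sdiff isClosed_singleton
  have hfc : ContinuousOn f (ball (0:ℂ) 1 \ {0}) := hf.1.continuousOn
  obtain ⟨ρ, hρ, hρΩ⟩ := Metric.nhds_basis_closedBall.mem_iff.1 (hΩ.mem_nhds hp)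
  set ε := min ε₀ (ρ / 2)
  have hε : 0 < ε := by positivity
  have hb : closedBall p (2 * ε) ⊆ Ω := by
    refine (closedBall_subset_closedBall ?_).trans hρΩ
    linarith [min_le_right ε₀ (ρ / 2)]
  suffices h : ∀ᶠ k in atTop, ∀ w : ℂ, ‖w‖ = ‖zk k‖ → dist (f w) p < ε by
    filter_upwards [h] with k hk w hw
    exact (hk w hw).trans_le (min_le_left _ _)
  by_contra hcon
  have hnear : ∀ᶠ k in atTop, dist (f (zk k)) p < ε := hfp (ball_mem_nhds p hε)
  have hfreq := (not_eventually.1 hcon).and_eventually hnear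
  have hfreq2 : ∃ᶠ k in atTop, ∃ θ : ℝ, |θ| ≤ Real.pi ∧ dist (f (zk k)) p < ε ∧
      dist (f (zk k * Complex.exp (θ * Complex.I))) p = ε := by
    refine hfreq.mono ?_
    rintro k ⟨h1, h2⟩
    push Not at h1
    obtain ⟨w, hw, hwε⟩ := h1
    have hz0 : zk k ≠ 0 := (hzk k).2
    set α := Complex.arg (w / zk k)
    have hwz : zk k * Complex.exp (α * Complex.I) = w := by
      have h3 := Complex.norm_mul_exp_arg_mul_I (w / zk k)
      rw [norm_div, hw, div_self (norm_ne_zero_iff.2 hz0)] at h3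
      simp only [Complex.ofReal_one, one_mul] at h3
      rw [h3]
      field_simp
    have hcont : Continuous (fun t : ℝ => dist (f (zk k * Complex.exp ((t * α : ℝ) * Complex.I))) p) := by
      refine Continuous.dist ?_ continuous_const
      refine hfc.comp_continuous (by fun_prop) ?_
      intro t
      refine ⟨?_, mul_ne_zero hz0 (Complex.exp_ne_zero _)⟩
      rw [mem_ball_zero_iff, norm_mul, Complex.norm_exp_ofReal_mul_I, mul_one]
      simpa using (hzk k).1
    obtain ⟨t, ht, htε⟩ := intermediate_value_Icc (zero_le_one' ℝ) hcont.continuousOn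
      (show ε ∈ Set.Icc _ _ from ⟨by simpa using h2.le, by simpa [hwz] using hwε⟩)
    refine ⟨t * α, ?_, h2, htε⟩
    rw [abs_mul, abs_of_nonneg ht.1]
    have h4 : |α| ≤ Real.pi := Complex.abs_arg_le_pi _
    nlinarith [abs_nonneg α, ht.2, ht.1]
  obtain ⟨φ, hφ, hφP⟩ := Filter.extraction_of_frequently_atTop hfreq2
  choose θ hθ hx hy using hφP
  obtain ⟨y, hys, ψ, hψ, hlim⟩ := (isCompact_sphere p ε).tendsto_subseq
    (x := fun k => f (zk (φ k) * Complex.exp (θ k * Complex.I))) (fun k => hy k)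
  have hyp : p ≠ y := by
    rintro rfl
    simp at hys
    linarith
  have hyb : y ∈ closedBall p ε := sphere_subset_closedBall hys
  have hyΩ : y ∈ Ω := hb (closedBall_subset_closedBall (by linarith) hyb)
  have hpos := hhyp p hp y hyΩ hyp
  obtain ⟨M, hM0, hM⟩ := kw_smooth_bound
  set d := minDist n Ω p y
  set r := 2 / d
  have hr : 0 < r := by positivity
  have hsub : Tendsto (fun k => φ (ψ k)) atTop atTop :=
    hφ.tendsto_atTop.comp hψ.tendsto_atTop
  have hlim1 : ∀ᶠ k in atTop, 2 * (2 * r) * M * ‖f (zk (φ (ψ k))) - p‖ ≤ ε := by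
    have h1 : Tendsto (fun k => 2 * (2 * r) * M * ‖f (zk (φ (ψ k))) - p‖) atTop
        (nhds (2 * (2 * r) * M * ‖p - p‖)) :=
      ((hfp.comp hsub).sub_const p).norm.const_mul _
    rw [sub_self, norm_zero, mul_zero] at h1
    exact (h1.eventually (gt_mem_nhds hε)).mono fun k hk => hk.le
  have hlim2 : ∀ᶠ k in atTop, 2 * r * M *
      ‖y - f (zk (φ (ψ k)) * Complex.exp (θ (ψ k) * Complex.I))‖ ≤ ε := by
    have h1 : Tendsto (fun k => 2 * r * M *
        ‖y - f (zk (φ (ψ k)) * Complex.exp (θ (ψ k) * Complex.I))‖) atTop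
        (nhds (2 * r * M * ‖y - y‖)) :=
      (hlim.const_sub y).norm.const_mul _
    rw [sub_self, norm_zero, mul_zero] at h1
    exact (h1.eventually (gt_mem_nhds hε)).mono fun k hk => hk.le
  have hlim3 : ∀ᶠ k in atTop, 2 * (2 * r) * Real.pi * M ≤ -Real.log ‖zk (φ (ψ k))‖ := by
    have h1 : Tendsto (fun k => ‖zk (φ (ψ k))‖) atTop (nhdsWithin 0 (Set.Ioi 0)) := by
      refine tendsto_nhdsWithin_iff.2 ⟨?_, ?_⟩
      · simpa using (hzk0.comp hsub).norm
      · exact Eventually.of_forall fun k => norm_pos_iff.2 (hzk _).2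
    exact (tendsto_neg_atBot_atTop.comp (Real.tendsto_log_nhdsGT_zero.comp h1)).eventually_ge_atTop _
  obtain ⟨k, h1, h2, h3⟩ := (hlim1.and (hlim2.and hlim3)).exists
  have hxb : f (zk (φ (ψ k))) ∈ closedBall p ε := (hx (ψ k)).le
  have hyb' : f (zk (φ (ψ k)) * Complex.exp (θ (ψ k) * Complex.I)) ∈ closedBall p ε :=
    (hy (ψ k)).le
  have s1 := kw_seg n hn Ω p p (f (zk (φ (ψ k)))) (2 * (2 * r)) ε M hε (by positivity) hM hb
    (mem_closedBall_self hε.le) hxb h1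
  have s2 := kw_arc n Ω f hf hfΩ (zk (φ (ψ k))) (hzk _) (θ (ψ k)) (2 * (2 * r)) M (by positivity) hM
    (le_trans (by gcongr; exact hθ _) h3)
  have s3 := kw_seg n hn Ω p _ y (2 * r) ε M hε (by positivity) hM hb hyb' hyb h2
  have := kw_dist_le n Ω p y r hr (kw_trans n Ω _ _ _ r (kw_trans n Ω _ _ _ (2 * r) s1 s2) s3)
  have hrd : 1 / r = d / 2 := by simp only [r]; field_simp
  rw [hrd] at this
  linarith

open InnerProductSpace in
theorem kw_limit (u : ℂ → ℝ) (a : ℝ) (hu : HarmonicOnNhd u (ball 0 1 \ {0}))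
    (zk : ℕ → ℂ) (hzk : ∀ k, zk k ∈ ball (0:ℂ) 1 \ {0})
    (hzk0 : Tendsto zk atTop (nhds 0))
    (h : ∀ δ > 0, ∀ᶠ k in atTop, ∀ w : ℂ, ‖w‖ = ‖zk k‖ → |u w - a| < δ) :
    Tendsto u (nhdsWithin 0 {0}ᶜ) (nhds a) := by
  rw [Metric.tendsto_nhds]
  intro δ hδ
  obtain ⟨K, hK⟩ := eventually_atTop.1 (h (δ / 2) (by positivity))
  have hKp : 0 < ‖zk K‖ := norm_pos_iff.2 (hzk K).2
  have hK1 : ‖zk K‖ < 1 := by simpa using (hzk K).1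
  filter_upwards [self_mem_nhdsWithin, mem_nhdsWithin_of_mem_nhds (ball_mem_nhds (0:ℂ) hKp)]
    with z hz0 hz
  have hz' : ‖z‖ < ‖zk K‖ := by simpa using hz
  have hzp : 0 < ‖z‖ := norm_pos_iff.2 hz0
  obtain ⟨l, hl, hlK⟩ := ((hzk0.eventually (ball_mem_nhds (0:ℂ) hzp)).and (eventually_ge_atTop K)).exists
  have hl' : ‖zk l‖ < ‖z‖ := by simpa using hl
  have hlp : 0 < ‖zk l‖ := norm_pos_iff.2 (hzk l).2
  have hh : ∀ w : ℂ, ‖zk l‖ ≤ ‖w‖ → ‖w‖ ≤ ‖zk K‖ → HarmonicAt u w := fun w h1 h2 =>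
    hu w ⟨by simpa using h2.trans_lt hK1, norm_pos_iff.1 (hlp.trans_le h1)⟩
  have m1 := kw_max u ‖zk l‖ ‖zk K‖ (a + δ / 2) hlp hh
    (fun w hw => by have := (abs_lt.1 (hK l hlK w hw)).2; linarith)
    (fun w hw => by have := (abs_lt.1 (hK K le_rfl w hw)).2; linarith) z hl'.le hz'.le
  have m2 := kw_max (-u) ‖zk l‖ ‖zk K‖ (-a + δ / 2) hlp (fun w h1 h2 => (hh w h1 h2).neg)
    (fun w hw => by have := (abs_lt.1 (hK l hlK w hw)).1; simp only [Pi.neg_apply]; linarith)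
    (fun w hw => by have := (abs_lt.1 (hK K le_rfl w hw)).1; simp only [Pi.neg_apply]; linarith)
    z hl'.le hz'.le
  simp only [Pi.neg_apply] at m2
  rw [Real.dist_eq, abs_lt]
  constructor <;> linarith

/-- Kwack-type extension theorem for minimal discs: let `Ω ⊆ ℝⁿ` be a hyperbolic domain
and `f : D* → Ω` a conformal harmonic map from the punctured disc. If some sequence
`z_k → 0` satisfies `f(z_k) → p ∈ Ω`, then `f` extends to a conformal harmonic map
`D → Ω`. -/
theorem stmt16 (n : ℕ) (hn : 3 ≤ n) (Ω : Set (EuclideanSpace ℝ (Fin n)))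
    (hΩ : IsOpen Ω) (hΩconn : IsConnected Ω) (hhyp : Hyperbolic n Ω)
    (f : ℂ → EuclideanSpace ℝ (Fin n))
    (hf : ConformalHarmonicOn n f (ball (0:ℂ) 1 \ {0}))
    (hfΩ : Set.MapsTo f (ball (0:ℂ) 1 \ {0}) Ω)
    (zk : ℕ → ℂ) (hzk : ∀ k, zk k ∈ ball (0:ℂ) 1 \ {0})
    (hzk0 : Tendsto zk atTop (nhds 0))
    (p : EuclideanSpace ℝ (Fin n)) (hp : p ∈ Ω)
    (hfp : Tendsto (fun k => f (zk k)) atTop (nhds p)) :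
    ∃ F : ℂ → EuclideanSpace ℝ (Fin n),
      ConformalHarmonicOn n F (ball (0:ℂ) 1) ∧
      Set.MapsTo F (ball (0:ℂ) 1) Ω ∧
      ∀ z ∈ ball (0:ℂ) 1 \ {0}, F z = f z := by
  have hopen : IsOpen (ball (0:ℂ) 1 \ {0}) := isOpen_ball.sdiff isClosed_singleton
  have hharm := kw_harm n f _ hopen hf
  have hex : ∀ i : Fin n, ∃ v : ℂ → ℝ, InnerProductSpace.HarmonicOnNhd v (ball 0 1) ∧
      (∀ z ∈ ball (0:ℂ) 1 \ {0}, v z = f z i) ∧ v 0 = p i := by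
    intro i
    have hi := kw_harm_comp n f _ hharm i
    refine kw_remov (fun z => f z i) (p i) hi (kw_limit _ _ hi zk hzk hzk0 ?_)
    intro δ hδ
    filter_upwards [kw_circle n hn Ω hΩ hhyp f hf hfΩ zk hzk hzk0 p hp hfp δ hδ] with k hk w hw
    refine lt_of_le_of_lt ?_ (hk w hw)
    rw [dist_eq_norm]
    simpa using PiLp.norm_apply_le (f w - p) i
  choose v hv1 hv2 hv3 using hex
  set F : ℂ → EuclideanSpace ℝ (Fin n) := fun z => WithLp.toLp 2 (fun i => v i z) with hF
  have hFf : ∀ z ∈ ball (0:ℂ) 1 \ {0}, F z = f z := by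
    intro z hz
    ext i
    exact hv2 i z hz
  have hF0 : F 0 = p := by
    ext i
    exact hv3 i
  obtain ⟨hC, hlap⟩ := kw_harm_of_comp n F (ball 0 1) (fun i => hv1 i)
  have hconf : ∀ z ∈ ball (0:ℂ) 1 \ {0}, ‖fderiv ℝ F z 1‖ = ‖fderiv ℝ F z Complex.I‖ ∧
      ⟪fderiv ℝ F z 1, fderiv ℝ F z Complex.I⟫ = 0 := by
    intro z hz
    have : F =ᶠ[nhds z] f := by
      filter_upwards [hopen.mem_nhds hz] with w hw using hFf w hw
    rw [this.fderiv_eq]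
    exact hf.2.2 z hz
  have hev : ∀ᶠ z in nhdsWithin (0:ℂ) {0}ᶜ, z ∈ ball (0:ℂ) 1 \ {0} := by
    filter_upwards [self_mem_nhdsWithin, mem_nhdsWithin_of_mem_nhds (ball_mem_nhds (0:ℂ) one_pos)]
      with z h1 h2 using ⟨h2, h1⟩
  have hcd : ContinuousAt (fderiv ℝ F) 0 :=
    ((hC.contDiffAt (ball_mem_nhds (0:ℂ) one_pos)).fderiv_right (m := 1) (by norm_num)).continuousAt
  have hc1 : Tendsto (fun z => fderiv ℝ F z 1) (nhdsWithin 0 {0}ᶜ) (nhds (fderiv ℝ F 0 1)) :=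
    (hcd.clm_apply continuousAt_const).tendsto.mono_left nhdsWithin_le_nhds
  have hcI : Tendsto (fun z => fderiv ℝ F z Complex.I) (nhdsWithin 0 {0}ᶜ)
      (nhds (fderiv ℝ F 0 Complex.I)) :=
    (hcd.clm_apply continuousAt_const).tendsto.mono_left nhdsWithin_le_nhds
  refine ⟨F, ⟨hC, hlap, ?_⟩, ?_, hFf⟩
  · intro z hz
    by_cases h0 : z = 0
    · subst h0
      refine ⟨tendsto_nhds_unique (hc1.norm.congr' ?_) hcI.norm,
        tendsto_nhds_unique ((hc1.inner hcI).congr' ?_) tendsto_const_nhds⟩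
      · filter_upwards [hev] with w hw using (hconf w hw).1
      · filter_upwards [hev] with w hw using (hconf w hw).2
    · exact hconf z ⟨hz, h0⟩
  · intro z hz
    by_cases h0 : z = 0
    · rw [h0, hF0]; exact hp
    · rw [hFf z ⟨hz, h0⟩]; exact hfΩ ⟨hz, h0⟩
end

section
/- Let v : D → (−∞, 0) be a negative C² function on the open unit disc whose Laplacian satisfies |Δv(z)| ≤ C₁ |v(0)| for all z ∈ D, for some constant C₁ > 0. Then |∇v(0)| ≤ (5C₁ + 2) |v(0)|. -/
open Metric

/-- The Laplacian `Δv = v_xx + v_yy` of a function `v : ℂ → ℝ`. -/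
noncomputable def lap (v : ℂ → ℝ) (z : ℂ) : ℝ :=
  fderiv ℝ (fun w => fderiv ℝ v w 1) z 1 +
  fderiv ℝ (fun w => fderiv ℝ v w Complex.I) z Complex.I


noncomputable def EE (θ : ℝ) : ℂ := Real.cos θ • (1:ℂ) + Real.sin θ • Complex.I
noncomputable def EF (θ : ℝ) : ℂ := (-Real.sin θ) • (1:ℂ) + Real.cos θ • Complex.I
noncomputable def dx (f : ℂ → ℝ) (z : ℂ) : ℝ := fderiv ℝ f z 1
noncomputable def dy (f : ℂ → ℝ) (z : ℂ) : ℝ := fderiv ℝ f z Complex.I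

lemma EE_norm (θ : ℝ) : ‖EE θ‖ = 1 := by
  have : EE θ = Complex.exp (θ * Complex.I) := by
    rw [Complex.exp_mul_I]; simp [EE]
  rw [this, Complex.norm_exp_ofReal_mul_I]

lemma EE_cont : Continuous EE := by unfold EE; fun_prop

lemma EE_deriv (θ : ℝ) : HasDerivAt EE (EF θ) θ :=
  ((Real.hasDerivAt_cos θ).smul_const (1:ℂ)).add ((Real.hasDerivAt_sin θ).smul_const Complex.I)

lemma mem_b {r : ℝ} (hr : |r| < 1) (θ : ℝ) : r • EE θ ∈ ball (0:ℂ) 1 := by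
  simp [EE_norm, hr]

lemma fd_EE (f : ℂ → ℝ) (z : ℂ) (θ : ℝ) :
    fderiv ℝ f z (EE θ) = dx f z * Real.cos θ + dy f z * Real.sin θ := by
  simp only [EE, map_add, map_smul, dx, dy, smul_eq_mul]; ring

lemma fd_EF (f : ℂ → ℝ) (z : ℂ) (θ : ℝ) :
    fderiv ℝ f z (EF θ) = - dx f z * Real.sin θ + dy f z * Real.cos θ := by
  simp only [EF, map_add, map_smul, dx, dy, smul_eq_mul]; ring

lemma cd_fd {f : ℂ → ℝ} {n : WithTop ℕ∞} (hf : ContDiffOn ℝ (n+1) f (ball (0:ℂ) 1)) (e : ℂ) :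
    ContDiffOn ℝ n (fun z => fderiv ℝ f z e) (ball (0:ℂ) 1) :=
  (hf.fderiv_of_isOpen isOpen_ball le_rfl).clm_apply contDiffOn_const

lemma cont_circ {f : ℂ → ℝ} (hf : ContinuousOn f (ball (0:ℂ) 1)) {r : ℝ} (hr : |r| < 1) :
    Continuous (fun θ => f (r • EE θ)) :=
  hf.comp_continuous (EE_cont.const_smul r) (fun θ => mem_b hr θ)

lemma hd_r {f : ℂ → ℝ} (hf : ContDiffOn ℝ 1 f (ball (0:ℂ) 1)) {r : ℝ} (hr : |r| < 1) (θ : ℝ) :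
    HasDerivAt (fun r : ℝ => f (r • EE θ))
      (dx f (r • EE θ) * Real.cos θ + dy f (r • EE θ) * Real.sin θ) r := by
  have h1 : HasFDerivAt f _ (r • EE θ) :=
    ((hf.differentiableOn one_ne_zero).differentiableAt
      (isOpen_ball.mem_nhds (mem_b hr θ))).hasFDerivAt
  have h2 : HasDerivAt (fun r : ℝ => r • EE θ) (EE θ) r := by
    simpa using (hasDerivAt_id r).smul_const (EE θ)
  rw [← fd_EE]
  exact h1.comp_hasDerivAt r h2

lemma hd_t {f : ℂ → ℝ} (hf : ContDiffOn ℝ 1 f (ball (0:ℂ) 1)) {r : ℝ} (hr : |r| < 1) (θ : ℝ) :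
    HasDerivAt (fun θ : ℝ => f (r • EE θ))
      (r * (- dx f (r • EE θ) * Real.sin θ + dy f (r • EE θ) * Real.cos θ)) θ := by
  have h1 : HasFDerivAt f _ (r • EE θ) :=
    ((hf.differentiableOn one_ne_zero).differentiableAt
      (isOpen_ball.mem_nhds (mem_b hr θ))).hasFDerivAt
  have h2 : HasDerivAt (fun θ : ℝ => r • EE θ) (r • EF θ) θ := (EE_deriv θ).const_smul r
  have := h1.comp_hasDerivAt θ h2
  rw [map_smul, fd_EF] at this
  exact this

lemma hd_int {f : ℂ → ℝ} (hf : ContDiffOn ℝ 1 f (ball (0:ℂ) 1)) {w : ℝ → ℝ} (hw : Continuous w)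
    {r : ℝ} (hr : |r| < 1) :
    HasDerivAt (fun r : ℝ => ∫ θ in (0:ℝ)..(2 * Real.pi), f (r • EE θ) * w θ)
      (∫ θ in (0:ℝ)..(2 * Real.pi),
        (dx f (r • EE θ) * Real.cos θ + dy f (r • EE θ) * Real.sin θ) * w θ) r := by
  obtain ⟨ρ, hρ1, hρ2⟩ := exists_between hr
  have hx : ContinuousOn (dx f) (ball (0:ℂ) 1) := (cd_fd (n := 0) (by simpa using hf) 1).continuousOn
  have hy : ContinuousOn (dy f) (ball (0:ℂ) 1) :=
    (cd_fd (n := 0) (by simpa using hf) Complex.I).continuousOn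
  have hsub : closedBall (0:ℂ) ρ ⊆ ball 0 1 := closedBall_subset_ball hρ2
  obtain ⟨Bx, hBx⟩ := (isCompact_closedBall (0:ℂ) ρ).exists_bound_of_continuousOn (hx.mono hsub)
  obtain ⟨By, hBy⟩ := (isCompact_closedBall (0:ℂ) ρ).exists_bound_of_continuousOn (hy.mono hsub)
  have hs : {s : ℝ | |s| < ρ} ∈ nhds r :=
    (isOpen_lt continuous_abs continuous_const).mem_nhds hρ1
  refine (intervalIntegral.hasDerivAt_integral_of_dominated_loc_of_deriv_le
    (F := fun r θ => f (r • EE θ) * w θ)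
    (F' := fun r θ => (dx f (r • EE θ) * Real.cos θ + dy f (r • EE θ) * Real.sin θ) * w θ)
    (bound := fun θ => (Bx + By) * |w θ|) hs ?_ ?_ ?_ ?_ ?_ ?_).2
  · filter_upwards [hs] with s hs
    exact ((cont_circ hf.continuousOn (lt_trans hs hρ2)).mul hw).aestronglyMeasurable
  · exact ((cont_circ hf.continuousOn hr).mul hw).intervalIntegrable _ _
  · have h1 := cont_circ hx hr
    have h2 := cont_circ hy hr
    exact Continuous.aestronglyMeasurable (by fun_prop)
  · refine Filter.Eventually.of_forall fun θ _ s hs => ?_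
    have hm : s • EE θ ∈ closedBall (0:ℂ) ρ := by
      simp only [mem_closedBall, dist_zero_right, norm_smul, EE_norm, mul_one]; exact le_of_lt hs
    have h1 := hBx _ hm
    have h2 := hBy _ hm
    rw [norm_mul, Real.norm_eq_abs (w θ)]
    gcongr
    refine (norm_add_le _ _).trans ?_
    rw [norm_mul, norm_mul]
    have := Real.abs_cos_le_one θ
    have := Real.abs_sin_le_one θ
    simp only [Real.norm_eq_abs] at *
    gcongr
    · exact (mul_le_of_le_one_right (abs_nonneg _) ‹_›).trans h1
    · exact (mul_le_of_le_one_right (abs_nonneg _) ‹_›).trans h2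
  · exact Continuous.intervalIntegrable (by fun_prop) _ _
  · refine Filter.Eventually.of_forall fun θ _ s hs => ?_
    exact (hd_r hf (lt_trans hs hρ2) θ).mul_const (w θ)

/-- the weighted circle integral -/
noncomputable def AA (f : ℂ → ℝ) (w : ℝ → ℝ) (r : ℝ) : ℝ :=
  ∫ θ in (0:ℝ)..(2 * Real.pi), f (r • EE θ) * w θ

/-- the weighted integral of the radial derivative -/
noncomputable def AB (f : ℂ → ℝ) (w : ℝ → ℝ) (r : ℝ) : ℝ :=
  ∫ θ in (0:ℝ)..(2 * Real.pi),
    (dx f (r • EE θ) * Real.cos θ + dy f (r • EE θ) * Real.sin θ) * w θ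

lemma EE_per : EE (2 * Real.pi) = EE 0 := by simp [EE]

lemma core {v : ℂ → ℝ} (hv : ContDiffOn ℝ 2 v (ball (0:ℂ) 1)) {w w1 w2 : ℝ → ℝ}
    (hw : ∀ θ, HasDerivAt w (w1 θ) θ) (hw1 : ∀ θ, HasDerivAt w1 (w2 θ) θ) (hw2 : Continuous w2)
    (hp : w (2 * Real.pi) = w 0) (hp1 : w1 (2 * Real.pi) = w1 0) {r : ℝ} (hr : |r| < 1) :
    ∃ A2, HasDerivAt (AB v w) A2 r ∧
      r ^ 2 * A2 + r * AB v w r + AA v w2 r = r ^ 2 * AA (lap v) w r := by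
  have hcw : Continuous w := continuous_iff_continuousAt.2 fun θ => (hw θ).continuousAt
  have hcw1 : Continuous w1 := continuous_iff_continuousAt.2 fun θ => (hw1 θ).continuousAt
  have hv1 : ContDiffOn ℝ 1 v (ball (0:ℂ) 1) := hv.of_le (by norm_num)
  have hx : ContDiffOn ℝ 1 (dx v) (ball (0:ℂ) 1) := cd_fd (by simpa [one_add_one_eq_two] using hv) 1
  have hy : ContDiffOn ℝ 1 (dy v) (ball (0:ℂ) 1) :=
    cd_fd (by simpa [one_add_one_eq_two] using hv) Complex.I
  have cxx := cont_circ (cd_fd (n := 0) (by simpa using hx) 1).continuousOn hr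
  have cxy := cont_circ (cd_fd (n := 0) (by simpa using hx) Complex.I).continuousOn hr
  have cyx := cont_circ (cd_fd (n := 0) (by simpa using hy) 1).continuousOn hr
  have cyy := cont_circ (cd_fd (n := 0) (by simpa using hy) Complex.I).continuousOn hr
  have cv := cont_circ hv.continuousOn hr
  obtain ⟨V, hV⟩ : ∃ V : ℝ → ℝ, ∀ θ, v (r • EE θ) = V θ := ⟨_, fun _ => rfl⟩
  have cV : Continuous V := by simpa only [hV] using cv
  have cx := cont_circ hx.continuousOn hr
  have cy := cont_circ hy.continuousOn hr
  change Continuous (fun θ => dx (dx v) (r • EE θ)) at cxx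
  change Continuous (fun θ => dy (dx v) (r • EE θ)) at cxy
  change Continuous (fun θ => dx (dy v) (r • EE θ)) at cyx
  change Continuous (fun θ => dy (dy v) (r • EE θ)) at cyy
  have hcos : Continuous (fun θ => Real.cos θ * w θ) := by fun_prop
  have hsin : Continuous (fun θ => Real.sin θ * w θ) := by fun_prop
  have hAB : AB v w =ᶠ[nhds r] fun s =>
      (∫ θ in (0:ℝ)..(2 * Real.pi), dx v (s • EE θ) * (Real.cos θ * w θ)) +
      ∫ θ in (0:ℝ)..(2 * Real.pi), dy v (s • EE θ) * (Real.sin θ * w θ) := by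
    filter_upwards [(isOpen_lt continuous_abs continuous_const).mem_nhds hr] with s hs
    have c1 := cont_circ hx.continuousOn hs
    have c2 := cont_circ hy.continuousOn hs
    rw [← intervalIntegral.integral_add]
    · unfold AB
      congr 1; ext θ; ring
    · exact Continuous.intervalIntegrable (by fun_prop) _ _
    · exact Continuous.intervalIntegrable (by fun_prop) _ _
  refine ⟨_, ((hd_int hx hcos hr).add (hd_int hy hsin hr)).congr_of_eventuallyEq hAB, ?_⟩
  have hper : ∫ θ in (0:ℝ)..(2 * Real.pi),
      ((r * (- (r * (- dx (dx v) (r • EE θ) * Real.sin θ + dy (dx v) (r • EE θ) * Real.cos θ)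
          * Real.sin θ + dx v (r • EE θ) * Real.cos θ)
        + (r * (- dx (dy v) (r • EE θ) * Real.sin θ + dy (dy v) (r • EE θ) * Real.cos θ)
          * Real.cos θ + dy v (r • EE θ) * (-Real.sin θ))) * w θ
        + r * (- (dx v (r • EE θ) * Real.sin θ) + dy v (r • EE θ) * Real.cos θ) * w1 θ)
        - (r * (- dx v (r • EE θ) * Real.sin θ + dy v (r • EE θ) * Real.cos θ) * w1 θ
          + v (r • EE θ) * w2 θ)) = 0 := by
    rw [intervalIntegral.integral_eq_sub_of_hasDerivAt (f := fun θ =>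
      r * (- (dx v (r • EE θ) * Real.sin θ) + dy v (r • EE θ) * Real.cos θ) * w θ
        - v (r • EE θ) * w1 θ)]
    · simp [EE_per, hp, hp1]
    · intro θ _
      exact ((((((hd_t hx hr θ).mul (Real.hasDerivAt_sin θ)).neg).add
        ((hd_t hy hr θ).mul (Real.hasDerivAt_cos θ))).const_mul r).mul (hw θ)).sub
        ((hd_t hv1 hr θ).mul (hw1 θ))
    · simp only [hV]
      exact Continuous.intervalIntegrable (by fun_prop) _ _
  have hl : ∀ z, lap v z = dx (dx v) z + dy (dy v) z := fun z => rfl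
  unfold AA AB
  simp only [hl]
  have key : ∀ a b c d e f : ℝ, e = 0 → a + b + c + d - f = - e → a + b + c + d = f := by
    intros; linarith
  rw [mul_add]
  refine key _ _ _ _ _ _ hper ?_
  simp only [← intervalIntegral.integral_const_mul, ← intervalIntegral.integral_neg]
  rw [← intervalIntegral.integral_add, ← intervalIntegral.integral_add,
    ← intervalIntegral.integral_add, ← intervalIntegral.integral_sub]
  · congr 1; ext θ
    have := Real.sin_sq_add_cos_sq θ
    have h2 : Real.sin θ ^ 2 = 1 - Real.cos θ ^ 2 := by linarith
    ring_nf
    simp only [h2]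
    ring
  all_goals (try simp only [hV]); exact Continuous.intervalIntegrable (by fun_prop) _ _

lemma AA_le {f : ℂ → ℝ} {w : ℝ → ℝ} {K W r : ℝ} (hr : |r| < 1)
    (hf : ∀ z ∈ ball (0:ℂ) 1, |f z| ≤ K) (hw : ∀ θ, |w θ| ≤ W) :
    |AA f w r| ≤ 2 * Real.pi * (K * W) := by
  have h := intervalIntegral.norm_integral_le_of_norm_le_const
    (a := 0) (b := 2 * Real.pi) (f := fun θ => f (r • EE θ) * w θ) (C := K * W) (fun θ _ => by
      rw [norm_mul]
      have h1 := hf _ (mem_b hr θ)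
      exact mul_le_mul h1 (hw θ) (abs_nonneg _) ((abs_nonneg _).trans h1))
  rw [sub_zero, abs_of_pos Real.two_pi_pos, mul_comm (K * W)] at h
  exact h

lemma abs_lt_of_mem {c r : ℝ} (hr : r < 1) (hc : 0 ≤ c) (hcr : c ≤ r) : |c| < 1 := by
  rw [abs_of_nonneg hc]; linarith

lemma mvt {g g' : ℝ → ℝ} {a r : ℝ} (har : a < r) (hg : ∀ s ∈ Set.Icc a r, HasDerivAt g (g' s) s) :
    ∃ c ∈ Set.Ioo a r, g r - g a = g' c * (r - a) := by
  obtain ⟨c, hc, h⟩ := exists_hasDerivAt_eq_slope g g' har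
    (fun s hs => (hg s hs).continuousAt.continuousWithinAt)
    (fun s hs => hg s (Set.Ioo_subset_Icc_self hs))
  refine ⟨c, hc, ?_⟩
  rw [h, div_mul_cancel₀ _ (by linarith)]

lemma mean_bound {v : ℂ → ℝ} {K : ℝ} (hv : ContDiffOn ℝ 2 v (ball (0:ℂ) 1))
    (hK : ∀ z ∈ ball (0:ℂ) 1, |lap v z| ≤ K) {r : ℝ} (hr0 : 0 < r) (hr : r < 1) :
    |AA v (fun _ => 1) r - 2 * Real.pi * v 0| ≤ 2 * Real.pi * K := by
  have hK0 : 0 ≤ K := (abs_nonneg _).trans (hK 0 (by simp))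
  have hpi := Real.pi_pos
  have hv1 : ContDiffOn ℝ 1 v (ball (0:ℂ) 1) := hv.of_le (by norm_num)
  have hcore := fun {s : ℝ} (hs : |s| < 1) => core hv (w := fun _ => 1) (w1 := fun _ => 0)
    (w2 := fun _ => 0) (fun θ => hasDerivAt_const θ 1) (fun θ => hasDerivAt_const θ 0)
    continuous_const rfl rfl hs
  choose! A2 hA2 hE using fun s (hs : |s| < 1) => hcore hs
  have hAB : ∀ s, 0 < s → s < 1 → |AB v (fun _ => 1) s| ≤ 2 * Real.pi * K := by
    intro s hs0 hs1
    obtain ⟨c, hc, h⟩ := mvt (g := fun s => s * AB v (fun _ => 1) s) hs0 (fun t ht =>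
      (hasDerivAt_id t).mul (hA2 t (abs_lt_of_mem hs1 ht.1 ht.2)))
    have hc1 := abs_lt_of_mem hs1 hc.1.le hc.2.le
    have e := hE c hc1
    have b := AA_le (w := fun _ => 1) (W := 1) hc1 hK (by simp)
    have z : AA v (fun _ => 0) c = 0 := by simp [AA]
    rw [z] at e
    simp only [id] at h
    have e2 : 1 * AB v (fun _ => 1) c + c * A2 c = c * AA (lap v) (fun _ => 1) c := by
      apply mul_left_cancel₀ hc.1.ne'
      linarith
    rw [e2] at h
    have h3 : AB v (fun _ => 1) s = c * AA (lap v) (fun _ => 1) c := by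
      apply mul_left_cancel₀ hs0.ne'
      linarith
    rw [h3, abs_mul, abs_of_pos hc.1]
    rw [mul_one] at b
    exact (mul_le_of_le_one_left (abs_nonneg _) (hc.2.le.trans hs1.le)).trans b
  obtain ⟨c, hc, h⟩ := mvt (g := AA v (fun _ => 1)) (g' := AB v (fun _ => 1)) hr0 (fun t ht =>
    hd_int hv1 continuous_const (abs_lt_of_mem hr ht.1 ht.2))
  have h0 : AA v (fun _ => 1) 0 = 2 * Real.pi * v 0 := by simp [AA]
  rw [← h0, h, sub_zero, abs_mul, abs_of_pos hr0]
  exact (mul_le_of_le_one_right (abs_nonneg _) hr.le).trans (hAB c hc.1 (hc.2.trans hr))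

lemma mode_bound {v : ℂ → ℝ} {K x y W : ℝ} (hv : ContDiffOn ℝ 2 v (ball (0:ℂ) 1))
    (hK : ∀ z ∈ ball (0:ℂ) 1, |lap v z| ≤ K)
    (hW : ∀ θ, |x * Real.cos θ + y * Real.sin θ| ≤ W) {r : ℝ} (hr0 : 0 < r) (hr : r < 1) :
    |AA v (fun θ => x * Real.cos θ + y * Real.sin θ) r / r
      - AB v (fun θ => x * Real.cos θ + y * Real.sin θ) 0| ≤ 2 * Real.pi * (K * W) := by
  have hK0 : 0 ≤ K := (abs_nonneg _).trans (hK 0 (by simp))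
  have hW0 : 0 ≤ W := (abs_nonneg _).trans (hW 0)
  have hpi := Real.pi_pos
  have hv1 : ContDiffOn ℝ 1 v (ball (0:ℂ) 1) := hv.of_le (by norm_num)
  have hcore := fun {s : ℝ} (hs : |s| < 1) => core hv
    (w := fun θ => x * Real.cos θ + y * Real.sin θ)
    (w1 := fun θ => x * (-Real.sin θ) + y * Real.cos θ)
    (w2 := fun θ => x * (-Real.cos θ) + y * (-Real.sin θ))
    (fun θ => ((Real.hasDerivAt_cos θ).const_mul x).add ((Real.hasDerivAt_sin θ).const_mul y))
    (fun θ => ((Real.hasDerivAt_sin θ).neg.const_mul x).add ((Real.hasDerivAt_cos θ).const_mul y))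
    (by fun_prop) (by simp) (by simp) hs
  choose! A2 hA2 hE using fun s (hs : |s| < 1) => hcore hs
  have hneg : ∀ s, AA v (fun θ => x * (-Real.cos θ) + y * (-Real.sin θ)) s
      = - AA v (fun θ => x * Real.cos θ + y * Real.sin θ) s := by
    intro s
    unfold AA
    rw [← intervalIntegral.integral_neg]
    congr 1; ext θ; ring
  have hA : ∀ s, |s| < 1 → HasDerivAt (AA v (fun θ => x * Real.cos θ + y * Real.sin θ))
      (AB v (fun θ => x * Real.cos θ + y * Real.sin θ) s) s := fun s hs =>
    hd_int hv1 (by fun_prop) hs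
  have h0 : AA v (fun θ => x * Real.cos θ + y * Real.sin θ) 0 = 0 := by
    have i1 : IntervalIntegrable (fun θ => x * Real.cos θ) MeasureTheory.volume 0 (2 * Real.pi) :=
      Continuous.intervalIntegrable (by fun_prop) _ _
    have i2 : IntervalIntegrable (fun θ => y * Real.sin θ) MeasureTheory.volume 0 (2 * Real.pi) :=
      Continuous.intervalIntegrable (by fun_prop) _ _
    simp [AA, intervalIntegral.integral_add i1 i2]
  set w : ℝ → ℝ := fun θ => x * Real.cos θ + y * Real.sin θ with hw
  simp only [hneg] at hE
  have hP : ∀ s, 0 < s → s < 1 →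
      |s ^ 2 * AB v w s - s * AA v w s| ≤ 2 * Real.pi * (K * W) * s ^ 3 := by
    intro s hs0 hs1
    obtain ⟨c, hc, h⟩ := mvt (g := fun s => s ^ 2 * AB v w s - s * AA v w s) hs0 (fun t ht =>
      ((hasDerivAt_pow 2 t).mul (hA2 t (abs_lt_of_mem hs1 ht.1 ht.2))).sub
      ((hasDerivAt_id t).mul (hA t (abs_lt_of_mem hs1 ht.1 ht.2))))
    have hc1 := abs_lt_of_mem hs1 hc.1.le hc.2.le
    have e := hE c hc1
    have b := AA_le (w := w) (W := W) hc1 hK hW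
    simp only [id] at h
    norm_num at h
    have h3 : s ^ 2 * AB v w s - s * AA v w s = c ^ 2 * AA (lap v) w c * s := by
      rw [h, ← e]; ring
    rw [h3, abs_mul, abs_mul, abs_of_pos hs0, abs_of_nonneg (sq_nonneg c)]
    have : c ^ 2 ≤ s ^ 2 := by have := hc.1.le; have := hc.2.le; gcongr
    calc c ^ 2 * |AA (lap v) w c| * s ≤ s ^ 2 * (2 * Real.pi * (K * W)) * s := by gcongr
      _ = _ := by ring
  have hslope : ∀ ε, 0 < ε → ε < r →
      |AA v w r / r - AA v w ε / ε| ≤ 2 * Real.pi * (K * W) := by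
    intro ε he her
    obtain ⟨c, hc, h⟩ := mvt (g := fun s => AA v w s / s)
      (g' := fun t => (AB v w t * t - AA v w t * 1) / t ^ 2) her (fun t ht =>
      (hA t (abs_lt_of_mem hr (he.le.trans ht.1) ht.2)).div (hasDerivAt_id t)
        (he.trans_le ht.1).ne')
    have hc0 : 0 < c := he.trans hc.1
    have b := hP c hc0 (hc.2.trans hr)
    have h4 : (AB v w c * c - AA v w c * 1) / c ^ 2
        = (c ^ 2 * AB v w c - c * AA v w c) / c ^ 3 := by
      field_simp
    rw [h, h4, abs_mul, abs_div, abs_of_pos (pow_pos hc0 3), abs_of_pos (sub_pos.2 her)]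
    have : |c ^ 2 * AB v w c - c * AA v w c| / c ^ 3 ≤ 2 * Real.pi * (K * W) := by
      rw [div_le_iff₀ (pow_pos hc0 3)]; exact b
    exact (mul_le_of_le_one_right (by positivity) (by linarith)).trans this
  have hlim : Filter.Tendsto (fun ε => AA v w ε / ε) (nhdsWithin 0 (Set.Ioi 0))
      (nhds (AB v w 0)) := by
    have := (hA 0 (by simp)).tendsto_slope_zero_right
    simpa [h0, div_eq_inv_mul] using this
  refine le_of_tendsto ((tendsto_const_nhds.sub hlim).abs) ?_
  filter_upwards [Ioo_mem_nhdsGT hr0] with ε he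
  exact hslope ε he.1 he.2

lemma AB_zero (v : ℂ → ℝ) (x y : ℝ) :
    AB v (fun θ => x * Real.cos θ + y * Real.sin θ) 0 = Real.pi * (x * dx v 0 + y * dy v 0) := by
  have e : AB v (fun θ => x * Real.cos θ + y * Real.sin θ) 0 =
      ∫ θ in (0:ℝ)..(2 * Real.pi), ((x * dx v 0) * Real.cos θ ^ 2 + (y * dy v 0) * Real.sin θ ^ 2
        + (x * dy v 0 + y * dx v 0) * (Real.sin θ * Real.cos θ)) := by
    unfold AB
    simp only [zero_smul]
    congr 1; ext θ; ring
  rw [e, intervalIntegral.integral_add, intervalIntegral.integral_add,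
    intervalIntegral.integral_const_mul, intervalIntegral.integral_const_mul,
    intervalIntegral.integral_const_mul, integral_cos_sq, integral_sin_sq,
    integral_sin_mul_cos₁]
  · simp; ring
  all_goals exact Continuous.intervalIntegrable (by fun_prop) _ _

/-- Let `v : D → (−∞, 0)` be a negative `C²` function on the unit disc with
`|Δv(z)| ≤ C₁|v(0)|` for all `z ∈ D`, for some `C₁ > 0`. Then
`|∇v(0)| ≤ (5C₁ + 2)|v(0)|`. -/
theorem stmt19 (v : ℂ → ℝ) (C₁ : ℝ) (hC₁ : 0 < C₁)
    (hC2 : ContDiffOn ℝ 2 v (ball (0:ℂ) 1))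
    (hneg : ∀ z ∈ ball (0:ℂ) 1, v z < 0)
    (hlap : ∀ z ∈ ball (0:ℂ) 1, |lap v z| ≤ C₁ * |v 0|) :
    ‖fderiv ℝ v 0‖ ≤ (5 * C₁ + 2) * |v 0| := by
  set K := C₁ * |v 0| with hKdef
  have hv0 : v 0 < 0 := hneg 0 (by simp)
  have hv0' : |v 0| = - v 0 := abs_of_neg hv0
  have hK0 : 0 ≤ K := by positivity
  have hpi := Real.pi_pos
  refine ContinuousLinearMap.opNorm_le_bound _ (by positivity) fun z => ?_
  have hz : fderiv ℝ v 0 z = z.re * dx v 0 + z.im * dy v 0 := by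
    have : z = z.re • (1:ℂ) + z.im • Complex.I := by
      simp [Complex.re_add_im]
    conv_lhs => rw [this]
    simp only [map_add, map_smul, smul_eq_mul, dx, dy]
  have hW : ∀ θ, |z.re * Real.cos θ + z.im * Real.sin θ| ≤ ‖z‖ := by
    intro θ
    refine abs_le_of_sq_le_sq ?_ (norm_nonneg _)
    rw [Complex.sq_norm, Complex.normSq_apply]
    nlinarith [sq_nonneg (z.re * Real.sin θ - z.im * Real.cos θ), Real.sin_sq_add_cos_sq θ]
  have hr : ∀ r ∈ Set.Ioo (0:ℝ) 1,
      Real.pi * |fderiv ℝ v 0 z| ≤ (2 * Real.pi * (|v 0| + K)) * ‖z‖ / r + 2 * Real.pi * (K * ‖z‖) := by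
    intro r hr
    have h1 := mean_bound hC2 hlap hr.1 hr.2
    have h2 := mode_bound hC2 hlap hW hr.1 hr.2
    rw [AB_zero, ← hz] at h2
    have hr' := abs_lt_of_mem hr.2 hr.1.le le_rfl
    have hc := cont_circ hC2.continuousOn hr'
    have h3 : |AA v (fun θ => z.re * Real.cos θ + z.im * Real.sin θ) r|
        ≤ ‖z‖ * (- AA v (fun _ => 1) r) := by
      unfold AA
      rw [← intervalIntegral.integral_neg, ← intervalIntegral.integral_const_mul]
      rw [← Real.norm_eq_abs]
      refine intervalIntegral.norm_integral_le_of_norm_le Real.two_pi_pos.le ?_ ?_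
      · refine Filter.Eventually.of_forall fun θ _ => ?_
        rw [norm_mul, Real.norm_eq_abs, abs_of_neg (hneg _ (mem_b hr' θ)), mul_one, mul_comm]
        have := hneg _ (mem_b hr' θ)
        exact mul_le_mul_of_nonneg_right (hW θ) (by linarith)
      · exact ((hc.mul continuous_const).neg.const_mul ‖z‖).intervalIntegrable _ _
    have h4 : - AA v (fun _ => 1) r ≤ 2 * Real.pi * (|v 0| + K) := by
      have := (abs_le.1 h1).1
      rw [hv0']; linarith
    have h5 : |AA v (fun θ => z.re * Real.cos θ + z.im * Real.sin θ) r / r|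
        ≤ (2 * Real.pi * (|v 0| + K)) * ‖z‖ / r := by
      rw [abs_div, abs_of_pos hr.1]
      have := hr.1.le
      gcongr
      refine h3.trans ?_
      rw [mul_comm]
      gcongr
    have h6 : Real.pi * |fderiv ℝ v 0 z| = |Real.pi * fderiv ℝ v 0 z| := by
      rw [abs_mul, abs_of_pos hpi]
    rw [h6]
    rw [abs_le] at *
    constructor <;> linarith [h2.1, h2.2, h5.1, h5.2]
  have hlim : Filter.Tendsto (fun r : ℝ =>
      (2 * Real.pi * (|v 0| + K)) * ‖z‖ / r + 2 * Real.pi * (K * ‖z‖)) (nhdsWithin 1 (Set.Iio 1))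
      (nhds ((2 * Real.pi * (|v 0| + K)) * ‖z‖ / 1 + 2 * Real.pi * (K * ‖z‖))) := by
    refine Filter.Tendsto.mono_left ?_ nhdsWithin_le_nhds
    exact (tendsto_const_nhds.div Filter.tendsto_id one_ne_zero).add tendsto_const_nhds
  have hfin := ge_of_tendsto hlim (by
    filter_upwards [Ioo_mem_nhdsLT (zero_lt_one (α := ℝ))] with r h using hr r h)
  rw [Real.norm_eq_abs]
  have : |fderiv ℝ v 0 z| ≤ (2 * |v 0| + 4 * K) * ‖z‖ := by
    refine le_of_mul_le_mul_left (hfin.trans (le_of_eq ?_)) hpi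
    ring
  refine this.trans ?_
  gcongr
  nlinarith
end
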